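/- Fix a positive integer m and s = (α,β) ∈ ℚ², and define the completed second Appell–Lerch sum B̂^s_m(τ,z) := B^s_m(τ,z) + m·∑_{ℓ=0}^{2m−1} ϑ^{s,*}_{m,ℓ}(τ)·θ_{m,ℓ}(τ,z). Then: (1) B̂^{(α+λ,β+μ)}_m = e(−m(μα−λβ+λμ))·B̂^{(α,β)}_m for all λ,μ ∈ ℤ; (2) B̂^s_m(τ, z+λτ+μ) = e(−m(λ²τ+2λz))·B̂^s_m(τ,z) for all λ,μ ∈ ℤ; (3) B̂^s_m((aτ+b)/(cτ+d), z/(cτ+d)) = (cτ+d)²·e(mcz²/(cτ+d))·B̂^{sγ}_m(τ,z) for every γ = (a,b;c,d) ∈ SL(2,ℤ), where sγ := (αa+βc, αb+βd). -/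

import Mathlib

noncomputable section

open Complex Filter Topology MeasureTheory
open scoped Classical

/-- `ee x = e^{2πix}`. -/
def ee (x : ℂ) : ℂ := Complex.exp (2 * (Real.pi : ℂ) * Complex.I * x)

/-- The index-`m` elliptic transformation law on `ℍ × ℂ`. -/
def EllipticLaw (m : ℕ) (φ : ℂ → ℂ → ℂ) : Prop :=
  ∀ τ : ℂ, 0 < τ.im → ∀ z : ℂ, ∀ lam mu : ℤ,
    φ τ (z + (lam : ℂ) * τ + (mu : ℂ)) =
      ee (-(m : ℂ) * ((lam : ℂ) ^ 2 * τ + 2 * (lam : ℂ) * z)) * φ τ z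

/-- The weight-`k` index-`m` modular transformation law on `ℍ × ℂ`. -/
def ModularLaw (k : ℤ) (m : ℕ) (φ : ℂ → ℂ → ℂ) : Prop :=
  ∀ τ : ℂ, 0 < τ.im → ∀ z : ℂ, ∀ a b c d : ℤ, a * d - b * c = 1 →
    φ (((a : ℂ) * τ + (b : ℂ)) / ((c : ℂ) * τ + (d : ℂ))) (z / ((c : ℂ) * τ + (d : ℂ))) =
      ((c : ℂ) * τ + (d : ℂ)) ^ k *
        ee ((m : ℂ) * (c : ℂ) * z ^ 2 / ((c : ℂ) * τ + (d : ℂ))) * φ τ z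

/-- The theta function `θ_{m,ℓ}(τ,z) = ∑_{r ≡ ℓ (mod 2m)} q^{r²/4m} y^r`. -/
def jTheta (m : ℕ) (l : ℤ) (τ z : ℂ) : ℂ :=
  ∑' n : ℤ, ee (((l : ℂ) + 2 * (m : ℂ) * (n : ℂ)) ^ 2 / (4 * (m : ℂ)) * τ +
      ((l : ℂ) + 2 * (m : ℂ) * (n : ℂ)) * z)

/-- The point `z_s = ατ + β` for `s = (α,β) ∈ ℚ²`. -/
def zpt (s : ℚ × ℚ) (τ : ℂ) : ℂ := (s.1 : ℚ) * τ + (s.2 : ℚ)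

/-- The rational function `R_c^{(2)}(y) = y^{⌊c⌋+1}·(1/(y-1)² + (c-⌊c⌋)/(y-1))`. -/
def Rc2 (c : ℝ) (y : ℂ) : ℂ :=
  y ^ (⌊c⌋ + 1) * (1 / (y - 1) ^ 2 + ((c : ℂ) - (⌊c⌋ : ℂ)) / (y - 1))

/-- The index-`m` averaging operator `Av^{(m)}[F](τ,z) = ∑_{λ∈ℤ} q^{mλ²} y^{2mλ} F(q^λ y)`. -/
def Av (m : ℕ) (F : ℂ → ℂ) (τ z : ℂ) : ℂ :=
  ∑' lam : ℤ, ee ((m : ℂ) * (lam : ℂ) ^ 2 * τ + 2 * (m : ℂ) * (lam : ℂ) * z) *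
      F (ee ((lam : ℂ) * τ + z))

/-- The second Appell–Lerch sum `B^s_m(τ,z) = e(-mα z_s)·Av^{(m)}[R^{(2)}_{-2mα}(y/y_s)]`. -/
def AppellB (m : ℕ) (s : ℚ × ℚ) (τ z : ℂ) : ℂ :=
  ee (-(m : ℂ) * (s.1 : ℚ) * zpt s τ) *
    Av m (fun w => Rc2 ((-(2 * (m : ℚ) * s.1) : ℚ) : ℝ) (w / ee (zpt s τ))) τ z

/-- The complementary error function. -/
def erfc (x : ℝ) : ℝ := 2 / Real.sqrt Real.pi * ∫ t in Set.Ioi x, Real.exp (-t ^ 2)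

/-- The element `λ = n + α + ℓ/2m` of `ℤ + α + ℓ/2m`. -/
def lamVal (m : ℕ) (s : ℚ × ℚ) (l : ℤ) (n : ℤ) : ℝ :=
  (n : ℝ) + (s.1 : ℝ) + (l : ℝ) / (2 * (m : ℝ))

/-- The weight-1/2 unary theta series `ϑ^s_{m,ℓ}(τ)`. -/
def thS (m : ℕ) (s : ℚ × ℚ) (l : ℤ) (τ : ℂ) : ℂ :=
  ee (-(m : ℂ) * (s.1 : ℚ) * (s.2 : ℚ)) *
    ∑' n : ℤ, ee (2 * (m : ℂ) * (s.2 : ℚ) * (lamVal m s l n : ℝ)) *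
      ee ((m : ℂ) * (lamVal m s l n : ℝ) ^ 2 * τ)

/-- The Eichler integral `ϑ^{s,*}_{m,ℓ}(τ)` of the weight-1/2 unary theta series. -/
def thSstar (m : ℕ) (s : ℚ × ℚ) (l : ℤ) (τ : ℂ) : ℂ :=
  (starRingEnd ℂ) (thS m s l τ) / ((2 * Real.pi * Real.sqrt ((m : ℝ) * τ.im) : ℝ) : ℂ) -
    ee ((m : ℂ) * (s.1 : ℚ) * (s.2 : ℚ)) *
      ∑' n : ℤ, (|lamVal m s l n| : ℝ) *
        ee (-(2 * (m : ℂ) * (s.2 : ℚ) * (lamVal m s l n : ℝ))) *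
        (erfc (2 * |lamVal m s l n| * Real.sqrt (Real.pi * (m : ℝ) * τ.im)) : ℂ) *
        ee (-(m : ℂ) * (lamVal m s l n : ℝ) ^ 2 * τ)

/-- The completed second Appell–Lerch sum
`B̂^s_m = B^s_m + m·∑_{ℓ mod 2m} ϑ^{s,*}_{m,ℓ}·θ_{m,ℓ}`. -/
def BhatB (m : ℕ) (s : ℚ × ℚ) (τ z : ℂ) : ℂ :=
  AppellB m s τ z +
    (m : ℂ) * ∑ l ∈ Finset.range (2 * m), thSstar m s (l : ℤ) τ * jTheta m (l : ℤ) τ z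


lemma ee_add (x y : ℂ) : ee (x + y) = ee x * ee y := by
  unfold ee; rw [← Complex.exp_add]; congr 1; ring

lemma ee_int (n : ℤ) : ee n = 1 := by
  unfold ee
  rw [show 2 * (Real.pi : ℂ) * I * (n:ℂ) = (n:ℂ) * (2 * Real.pi * I) by ring]
  exact Complex.exp_int_mul_two_pi_mul_I n

lemma ee_ne (x : ℂ) : ee x ≠ 0 := Complex.exp_ne_zero _

lemma ee_zero : ee 0 = 1 := by simp [ee]

lemma ee_neg (x : ℂ) : ee (-x) = (ee x)⁻¹ := by
  unfold ee; rw [← Complex.exp_neg]; congr 1; ring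

lemma ee_eq_add_int (x y : ℂ) (n : ℤ) (h : x = y + n) : ee x = ee y := by
  rw [h, ee_add, ee_int, mul_one]

def Xp (s : ℚ × ℚ) (τ : ℂ) (p : ℤ × ℤ) : ℂ :=
  ((p.1 : ℂ) - (s.1 : ℚ)) * τ + ((p.2 : ℂ) - (s.2 : ℚ))

/-- Term of the absolutely convergent Poincare type series. -/
def Pt (m : ℕ) (s : ℚ × ℚ) (τ z : ℂ) (p : ℤ × ℤ) : ℂ :=
  ee ((m : ℂ) * ((p.1 : ℂ) * (s.2 : ℚ) - (s.1 : ℚ) * (p.2 : ℂ)) +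
      (m : ℂ) * ((p.1 : ℂ) - (s.1 : ℚ)) * (2 * z + Xp s τ p)) *
    (Complex.exp (-((Real.pi : ℂ) * (m : ℂ) / (τ.im : ℂ)) * (z + Xp s τ p) ^ 2) /
      (z + Xp s τ p) ^ 2)

lemma Pt_elliptic (m : ℕ) (s : ℚ × ℚ) (τ z : ℂ) (l0 m0 : ℤ) (p : ℤ × ℤ) :
    Pt m s τ (z + (l0 : ℂ) * τ + (m0 : ℂ)) p =
      ee (-(m : ℂ) * ((l0 : ℂ) ^ 2 * τ + 2 * (l0 : ℂ) * z)) * Pt m s τ z (p + (l0, m0)) := by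
  have h : z + (l0 : ℂ) * τ + (m0 : ℂ) + Xp s τ p = z + Xp s τ (p + (l0, m0)) := by
    simp only [Xp, Prod.fst_add, Prod.snd_add]; push_cast; ring
  unfold Pt
  rw [h, ← mul_assoc, ← ee_add]
  congr 1
  apply ee_eq_add_int _ _ ((m:ℤ) * (p.1 * m0 - l0 * p.2 - l0*m0))
  simp only [Xp, Prod.fst_add, Prod.snd_add]; push_cast; ring

lemma Pt_shift (m : ℕ) (s : ℚ × ℚ) (τ z : ℂ) (l0 m0 : ℤ) (p : ℤ × ℤ) :
    Pt m (s.1 + (l0 : ℚ), s.2 + (m0 : ℚ)) τ z p =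
      ee (-(m : ℂ) * ((m0 : ℂ) * (s.1 : ℚ) - (l0 : ℂ) * (s.2 : ℚ) + (l0 : ℂ) * (m0 : ℂ))) *
       Pt m s τ z (p - (l0, m0)) := by
  have h : Xp (s.1 + (l0 : ℚ), s.2 + (m0 : ℚ)) τ p = Xp s τ (p - (l0, m0)) := by
    simp only [Xp, Prod.fst_sub, Prod.snd_sub]; push_cast; ring
  unfold Pt
  rw [h, ← mul_assoc, ← ee_add]
  congr 1
  apply ee_eq_add_int _ _ ((m:ℤ) * (p.1 * m0 - l0 * p.2 + l0*m0))
  simp only [Xp, Prod.fst_sub, Prod.snd_sub]; push_cast; ring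

lemma Pt_modular (m : ℕ) (s : ℚ × ℚ) (τ z : ℂ) (hτ : 0 < τ.im) (a b c d : ℤ)
    (hdet : a * d - b * c = 1) (p : ℤ × ℤ) :
    Pt m s (((a : ℂ) * τ + (b : ℂ)) / ((c : ℂ) * τ + (d : ℂ))) (z / ((c : ℂ) * τ + (d : ℂ))) p =
      ((c : ℂ) * τ + (d : ℂ)) ^ 2 *
          ee ((m : ℂ) * (c : ℂ) * z ^ 2 / ((c : ℂ) * τ + (d : ℂ))) *
      Pt m (s.1 * (a : ℚ) + s.2 * (c : ℚ), s.1 * (b : ℚ) + s.2 * (d : ℚ)) τ z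
        (p.1 * a + p.2 * c, p.1 * b + p.2 * d) := by
  have hdet' : (a:ℂ) * d - b * c = 1 := by exact_mod_cast hdet
  have hj : (c : ℂ) * τ + (d : ℂ) ≠ 0 := by
    intro h
    have h1 := congrArg Complex.im h
    have h2 := congrArg Complex.re h
    simp at h1 h2
    rcases h1 with h1 | h1
    · subst h1; simp at h2; subst h2; simp at hdet
    · exact hτ.ne' h1
  set j := (c : ℂ) * τ + (d : ℂ) with hjd
  have hT : (τ.im : ℂ) ≠ 0 := by exact_mod_cast hτ.ne'
  have hconj : (starRingEnd ℂ) τ = τ - 2 * I * (τ.im : ℂ) := by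
    apply Complex.ext <;> simp; ring
  have hjc : (starRingEnd ℂ) j = j - 2 * I * c * (τ.im : ℂ) := by
    simp only [hjd, map_add, map_mul, map_intCast, hconj]; ring
  have him : (((((a : ℂ) * τ + (b : ℂ)) / j).im : ℝ) : ℂ) = (τ.im : ℂ) / (j * (starRingEnd ℂ) j) := by
    have hcj : (starRingEnd ℂ) j ≠ 0 := by simpa using hj
    have : (((((a : ℂ) * τ + (b : ℂ)) / j).im : ℝ) : ℂ) =
      ((((a : ℂ) * τ + (b : ℂ)) / j) - (starRingEnd ℂ) (((a : ℂ) * τ + (b : ℂ)) / j)) / (2 * I) := by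
      rw [Complex.sub_conj]; field_simp [I_ne_zero]; push_cast; ring
    rw [this, map_div₀]
    field_simp [I_ne_zero]
    rw [hjc]
    simp only [hjd, map_add, map_mul, map_intCast, hconj]
    linear_combination (2 * I * (τ.im:ℂ)) * hdet'
  have hX : Xp s (((a : ℂ) * τ + (b : ℂ)) / j) p =
      Xp (s.1 * (a : ℚ) + s.2 * (c : ℚ), s.1 * (b : ℚ) + s.2 * (d : ℚ)) τ
        (p.1 * a + p.2 * c, p.1 * b + p.2 * d) / j := by
    simp only [Xp]; field_simp; simp only [hjd]; push_cast; ring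
  unfold Pt
  rw [hX, him]
  set X := Xp (s.1 * (a : ℚ) + s.2 * (c : ℚ), s.1 * (b : ℚ) + s.2 * (d : ℚ)) τ
        (p.1 * a + p.2 * c, p.1 * b + p.2 * d) with hXd
  have e1 : -((Real.pi : ℂ) * (m : ℂ) / ((τ.im : ℂ) / (j * (starRingEnd ℂ) j))) * (z / j + X / j) ^ 2
     = 2 * Real.pi * I * (m * c * (z + X)^2 / j) + -((Real.pi : ℂ) * (m : ℂ) / (τ.im : ℂ)) * (z + X) ^ 2 := by
    rw [hjc]; field_simp; ring
  rw [e1, Complex.exp_add]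
  change _ * (ee _ * _ / _) = _
  have e2 : ee ((m : ℂ) * ((p.1 : ℂ) * (s.2 : ℚ) - (s.1 : ℚ) * (p.2 : ℂ)) +
      (m : ℂ) * ((p.1 : ℂ) - (s.1 : ℚ)) * (2 * (z / j) + X / j)) * ee (m * c * (z + X)^2 / j) =
      ee ((m : ℂ) * (c : ℂ) * z ^ 2 / j) * ee ((m : ℂ) * (((p.1 * a + p.2 * c : ℤ) : ℂ) * ((s.1 * (b : ℚ) + s.2 * (d : ℚ) : ℚ) : ℂ) - ((s.1 * (a : ℚ) + s.2 * (c : ℚ) : ℚ) : ℂ) * ((p.1 * b + p.2 * d : ℤ) : ℂ)) +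
      (m : ℂ) * (((p.1 * a + p.2 * c : ℤ) : ℂ) - ((s.1 * (a : ℚ) + s.2 * (c : ℚ) : ℚ) : ℂ)) * (2 * z + X)) := by
    rw [← ee_add, ← ee_add]; congr 1
    have hcX : c * X = ((p.1 * a + p.2 * c) - (s.1 * a + s.2 * c)) * (j - d) + c * ((p.1 * b + p.2 * d) - (s.1 * b + s.2 * d)) := by
      simp only [hXd, Xp, hjd]; push_cast; ring
    have hcX' : c * X = ((p.1 * a + p.2 * c) - (s.1 * a + s.2 * c)) * j - (p.1 - s.1) := by
      rw [hcX]; linear_combination (-(p.1:ℂ) + s.1) * hdet'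
    clear_value X j
    push_cast
    field_simp
    linear_combination (m * (2 * z + X)) * hcX' + (m * j * (p.1 * s.2 - s.1 * p.2)) * (-hdet')
  have e3 : z / j + X / j = (z + X) / j := by ring
  rw [e3]
  have : ∀ A B C D E F : ℂ, A * B = C * D → A * (B * E / (F/j)^2) = j^2 * C * (D * (E / F^2)) := by
    intro A B C D E F h
    rw [div_pow, div_div_eq_mul_div]
    linear_combination (E / F^2 * j^2) * h
  exact this _ _ _ _ _ _ e2

def sl2Equiv (a b c d : ℤ) (hdet : a * d - b * c = 1) : ℤ × ℤ ≃ ℤ × ℤ where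
  toFun p := (p.1 * a + p.2 * c, p.1 * b + p.2 * d)
  invFun p := (p.1 * d - p.2 * c, - p.1 * b + p.2 * a)
  left_inv p := by
    ext
    · simp only; linear_combination p.1 * hdet
    · simp only; linear_combination p.2 * hdet
  right_inv p := by
    ext
    · simp only; linear_combination p.1 * hdet
    · simp only; linear_combination p.2 * hdet

/-- The reduction of the theorem to the lattice sum formula. -/
lemma main_of_P
  (H : ∀ (m : ℕ) (_ : 0 < m) (s : ℚ × ℚ) (τ : ℂ) (_ : 0 < τ.im) (z : ℂ)
      (_ : ∀ a b : ℤ, z ≠ zpt s τ + (a : ℂ) * τ + (b : ℂ)),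
      BhatB m s τ z = -(1 / (4 * (Real.pi:ℂ)^2)) * ∑' p : ℤ × ℤ, Pt m s τ z p)
  (m : ℕ) (hm : 0 < m) (s : ℚ × ℚ) :
    (∀ lam mu : ℤ, ∀ τ : ℂ, 0 < τ.im → ∀ z : ℂ,
      (∀ a b : ℤ, z ≠ zpt s τ + (a : ℂ) * τ + (b : ℂ)) →
      BhatB m (s.1 + (lam : ℚ), s.2 + (mu : ℚ)) τ z =
        ee (-(m : ℂ) * ((mu : ℂ) * (s.1 : ℚ) - (lam : ℂ) * (s.2 : ℚ) + (lam : ℂ) * (mu : ℂ))) *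
          BhatB m s τ z) ∧
    (∀ lam mu : ℤ, ∀ τ : ℂ, 0 < τ.im → ∀ z : ℂ,
      (∀ a b : ℤ, z ≠ zpt s τ + (a : ℂ) * τ + (b : ℂ)) →
      BhatB m s τ (z + (lam : ℂ) * τ + (mu : ℂ)) =
        ee (-(m : ℂ) * ((lam : ℂ) ^ 2 * τ + 2 * (lam : ℂ) * z)) * BhatB m s τ z) ∧
    (∀ a b c d : ℤ, a * d - b * c = 1 → ∀ τ : ℂ, 0 < τ.im → ∀ z : ℂ,
      (∀ i j : ℤ,
        z ≠ zpt (s.1 * (a : ℚ) + s.2 * (c : ℚ), s.1 * (b : ℚ) + s.2 * (d : ℚ)) τ +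
          (i : ℂ) * τ + (j : ℂ)) →
      BhatB m s (((a : ℂ) * τ + (b : ℂ)) / ((c : ℂ) * τ + (d : ℂ)))
          (z / ((c : ℂ) * τ + (d : ℂ))) =
        ((c : ℂ) * τ + (d : ℂ)) ^ 2 *
          ee ((m : ℂ) * (c : ℂ) * z ^ 2 / ((c : ℂ) * τ + (d : ℂ))) *
          BhatB m (s.1 * (a : ℚ) + s.2 * (c : ℚ), s.1 * (b : ℚ) + s.2 * (d : ℚ)) τ z) := by
  refine ⟨?_, ?_, ?_⟩
  · intro l0 m0 τ hτ z hz
    rw [H m hm s τ hτ z hz, H m hm _ τ hτ z]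
    · rw [← Equiv.tsum_eq (Equiv.subRight ((l0, m0) : ℤ × ℤ)) (Pt m s τ z)]
      simp only [Pt_shift, Equiv.subRight_apply, tsum_mul_left]
      ring
    · intro a b h
      apply hz (a + l0) (b + m0)
      rw [h]; simp only [zpt]; push_cast; ring
  · intro l0 m0 τ hτ z hz
    rw [H m hm s τ hτ z hz, H m hm _ τ hτ (z + (l0 : ℂ) * τ + (m0 : ℂ))]
    · rw [← Equiv.tsum_eq (Equiv.addRight ((l0, m0) : ℤ × ℤ)) (Pt m s τ z)]
      simp only [Pt_elliptic, Equiv.coe_addRight, tsum_mul_left]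
      ring
    · intro a b h
      apply hz (a - l0) (b - m0)
      push_cast; linear_combination h
  · intro a b c d hdet τ hτ z hz
    have hj : (c : ℂ) * τ + (d : ℂ) ≠ 0 := by
      intro h
      have h1 := congrArg Complex.im h
      have h2 := congrArg Complex.re h
      simp at h1 h2
      rcases h1 with h1 | h1
      · subst h1; simp at h2; subst h2; simp at hdet
      · exact hτ.ne' h1
    rw [H m hm _ τ hτ z hz, H m hm s _ _ (z / ((c : ℂ) * τ + (d : ℂ)))]
    · rw [← Equiv.tsum_eq (sl2Equiv a b c d hdet)
        (Pt m (s.1 * (a : ℚ) + s.2 * (c : ℚ), s.1 * (b : ℚ) + s.2 * (d : ℚ)) τ z)]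
      simp only [Pt_modular m s τ z hτ a b c d hdet, tsum_mul_left, sl2Equiv, Equiv.coe_fn_mk]
      ring
    · intro i k h
      apply hz (i * a + k * c) (i * b + k * d)
      rw [div_eq_iff hj] at h
      have ht := div_mul_cancel₀ ((a : ℂ) * τ + (b : ℂ)) hj
      rw [h]; simp only [zpt]; push_cast; linear_combination ((s.1:ℂ) + i) * ht
    · have : (((a : ℂ) * τ + (b : ℂ)) / ((c : ℂ) * τ + (d : ℂ))).im = τ.im / Complex.normSq ((c : ℂ) * τ + (d : ℂ)) := by
        rw [Complex.div_im, ← sub_div]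
        congr 1
        simp
        have hd : (a:ℝ) * d - b * c = 1 := by exact_mod_cast hdet
        linear_combination (τ.im) * hd
      rw [this]
      exact div_pos hτ (Complex.normSq_pos.mpr hj)


lemma gauss_int : Integrable (fun t : ℝ => Real.exp (-t ^ 2)) := by
  simpa using integrable_exp_neg_mul_sq (b := 1) one_pos

lemma erfc_eq (x : ℝ) : erfc x = 2 / Real.sqrt Real.pi *
    ((∫ t in Set.Ioi (0:ℝ), Real.exp (-t ^ 2)) - ∫ t in (0:ℝ)..x, Real.exp (-t ^ 2)) := by
  unfold erfc
  congr 1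
  rw [← intervalIntegral.integral_Ioi_sub_Ioi' gauss_int.integrableOn gauss_int.integrableOn]
  ring

lemma erfc_hasDerivAt (x : ℝ) : HasDerivAt erfc (-(2 / Real.sqrt Real.pi * Real.exp (-x ^ 2))) x := by
  have h : erfc = fun x => 2 / Real.sqrt Real.pi *
    ((∫ t in Set.Ioi (0:ℝ), Real.exp (-t ^ 2)) - ∫ t in (0:ℝ)..x, Real.exp (-t ^ 2)) := funext erfc_eq
  rw [h]
  have hc : Continuous (fun t : ℝ => Real.exp (-t ^ 2)) := by fun_prop
  have := (hc.integral_hasStrictDerivAt 0 x).hasDerivAt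
  refine ((this.const_sub _).const_mul (2 / Real.sqrt Real.pi)).congr_deriv ?_
  ring

lemma erfc_tendsto : Tendsto erfc atTop (𝓝 0) := by
  have h : erfc = fun x => 2 / Real.sqrt Real.pi *
    ((∫ t in Set.Ioi (0:ℝ), Real.exp (-t ^ 2)) - ∫ t in (0:ℝ)..x, Real.exp (-t ^ 2)) := funext erfc_eq
  rw [h]
  have := intervalIntegral_tendsto_integral_Ioi (0:ℝ) (gauss_int.integrableOn) tendsto_id
  have := (this.const_sub (∫ t in Set.Ioi (0:ℝ), Real.exp (-t ^ 2))).const_mul (2 / Real.sqrt Real.pi)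
  simpa using this

/-- The kernel. -/
def Kt (k t : ℝ) : ℝ := Real.sqrt (Real.pi / t) * Real.exp (-(Real.pi ^ 2 * k ^ 2 / t))

lemma sqrt_inv_int (a : ℝ) (ha : 0 < a) :
    IntervalIntegrable (fun t : ℝ => Real.sqrt (Real.pi / t)) volume 0 a := by
  have h := (intervalIntegral.intervalIntegrable_rpow' (a := 0) (b := a) (r := -1/2) (by norm_num)).const_mul (Real.sqrt Real.pi)
  refine h.congr ?_
  intro t ht
  rw [Set.uIoc_of_le ha.le] at ht
  change Real.sqrt Real.pi * t ^ ((-1:ℝ)/2) = Real.sqrt (Real.pi / t)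
  rw [Real.sqrt_div Real.pi_pos.le, Real.sqrt_eq_rpow t, div_eq_mul_inv (Real.sqrt Real.pi), ← Real.rpow_neg ht.1.le]
  congr 2; norm_num

lemma Kt_nonneg (k t : ℝ) : 0 ≤ Kt k t := by unfold Kt; positivity

lemma Kt_le (k a t : ℝ) (ht : 0 < t) (hta : t ≤ a) :
    Kt k t ≤ Real.sqrt (Real.pi / t) * Real.exp (-(Real.pi ^ 2 * k ^ 2 / a)) := by
  unfold Kt; gcongr

lemma Kt_int (k a : ℝ) (ha : 0 < a) : IntervalIntegrable (Kt k) volume 0 a := by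
  refine (sqrt_inv_int a ha).mono_fun ?_ ?_
  · apply Measurable.aestronglyMeasurable
    unfold Kt; fun_prop
  · refine (ae_restrict_mem measurableSet_uIoc).mono fun t ht => ?_
    rw [Set.uIoc_of_le ha.le] at ht
    change ‖Kt k t‖ ≤ ‖Real.sqrt (Real.pi / t)‖
    rw [Real.norm_of_nonneg (Kt_nonneg k t), Real.norm_of_nonneg (Real.sqrt_nonneg _)]
    unfold Kt
    apply mul_le_of_le_one_right (Real.sqrt_nonneg _)
    apply Real.exp_le_one_iff.mpr
    have := ht.1
    have : 0 ≤ Real.pi ^ 2 * k ^ 2 / t := by positivity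
    linarith

def Ik (a k : ℝ) : ℝ := ∫ t in (0:ℝ)..a, Kt k t

lemma Ik_nonneg (a k : ℝ) (ha : 0 < a) : 0 ≤ Ik a k :=
  intervalIntegral.integral_nonneg ha.le fun t _ => Kt_nonneg k t

lemma Ik_le (a k : ℝ) (ha : 0 < a) :
    Ik a k ≤ (∫ t in (0:ℝ)..a, Real.sqrt (Real.pi / t)) * Real.exp (-(Real.pi ^ 2 * k ^ 2 / a)) := by
  rw [← intervalIntegral.integral_mul_const]
  apply intervalIntegral.integral_mono_on_of_le_Ioo ha.le (Kt_int k a ha) ((sqrt_inv_int a ha).mul_const _)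
  intro t ht
  exact Kt_le k a t ht.1 ht.2.le

lemma Ik_eq (a k : ℝ) (ha : 0 < a) : Ik a k =
    2 * Real.sqrt (Real.pi * a) * Real.exp (-(Real.pi ^ 2 * k ^ 2 / a)) -
      2 * Real.pi ^ 2 * |k| * erfc (Real.pi * |k| / Real.sqrt a) := by
  set G : ℝ → ℝ := fun t => 2 * Real.sqrt (Real.pi * t) * Real.exp (-(Real.pi ^ 2 * k ^ 2 / t)) -
      2 * Real.pi ^ 2 * |k| * erfc (Real.pi * |k| / Real.sqrt t) with hG
  have hd : ∀ t : ℝ, 0 < t → HasDerivAt G (Kt k t) t := by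
    intro t ht
    have hpi := Real.pi_pos
    have h1 : HasDerivAt (fun t : ℝ => Real.sqrt (Real.pi * t)) (Real.pi / (2 * Real.sqrt (Real.pi * t))) t := by
      have := ((hasDerivAt_id t).const_mul Real.pi).sqrt (mul_pos hpi ht).ne'
      simpa using this
    have h2 : HasDerivAt (fun t : ℝ => Real.exp (-(Real.pi ^ 2 * k ^ 2 / t)))
        (Real.exp (-(Real.pi ^ 2 * k ^ 2 / t)) * (Real.pi ^ 2 * k ^ 2 / t ^ 2)) t := by
      have := ((((hasDerivAt_inv ht.ne')).const_mul (Real.pi^2*k^2)).neg).exp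
      have e : (fun t : ℝ => Real.exp (-(Real.pi ^ 2 * k ^ 2 / t))) = fun t : ℝ => Real.exp (-(Real.pi ^ 2 * k ^ 2 * t⁻¹)) := by
        funext t; rw [div_eq_mul_inv]
      rw [e]
      refine this.congr_deriv ?_
      change Real.exp (-(Real.pi ^ 2 * k ^ 2 * t⁻¹)) * _ = _
      rw [div_eq_mul_inv _ t]; ring
    have h3 : HasDerivAt (fun t : ℝ => Real.pi * |k| / Real.sqrt t)
        (-(Real.pi * |k| / (2 * t * Real.sqrt t))) t := by
      have hs : Real.sqrt t ≠ 0 := (Real.sqrt_pos.mpr ht).ne'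
      have := ((Real.hasDerivAt_sqrt ht.ne').inv hs).const_mul (Real.pi * |k|)
      have e : (fun t : ℝ => Real.pi * |k| / Real.sqrt t) = fun t : ℝ => Real.pi * |k| * (Real.sqrt t)⁻¹ := by
        funext t; rw [div_eq_mul_inv]
      rw [e]
      refine this.congr_deriv ?_
      rw [Real.sq_sqrt ht.le]; field_simp
    have h4 := (erfc_hasDerivAt (Real.pi * |k| / Real.sqrt t)).comp t h3
    have h5 := ((h1.const_mul 2).mul h2).sub (h4.const_mul (2 * Real.pi ^ 2 * |k|))
    refine h5.congr_deriv ?_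
    have e1 : -(Real.pi * |k| / Real.sqrt t)^2 = -(Real.pi ^ 2 * k ^ 2 / t) := by
      rw [div_pow, Real.sq_sqrt ht.le, mul_pow, sq_abs]
    rw [e1]
    unfold Kt
    set E := Real.exp (-(Real.pi ^ 2 * k ^ 2 / t))
    rw [Real.sqrt_mul hpi.le, Real.sqrt_div hpi.le]
    have hs : 0 < Real.sqrt t := Real.sqrt_pos.mpr ht
    have hp : 0 < Real.sqrt Real.pi := Real.sqrt_pos.mpr hpi
    have q1 : Real.pi = Real.sqrt Real.pi ^ 2 := (Real.sq_sqrt hpi.le).symm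
    have q2 : t = Real.sqrt t ^ 2 := (Real.sq_sqrt ht.le).symm
    have q3 : |k| * |k| = k ^ 2 := by rw [← sq, sq_abs]
    set S := Real.sqrt t
    set p := Real.sqrt Real.pi
    clear_value E
    rw [q1, q2]
    field_simp
    ring_nf
    rw [sq_abs]
    ring
  have hlim : Tendsto G (𝓝[>] 0) (𝓝 0) := by
    have t1 : Tendsto (fun t : ℝ => 2 * Real.sqrt (Real.pi * t) * Real.exp (-(Real.pi ^ 2 * k ^ 2 / t))) (𝓝[>] 0) (𝓝 0) := by
      have : Tendsto (fun t : ℝ => 2 * Real.sqrt (Real.pi * t)) (𝓝[>] 0) (𝓝 0) := by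
        have hc : Continuous (fun t : ℝ => 2 * Real.sqrt (Real.pi * t)) := by fun_prop
        have := hc.tendsto 0
        simp only [mul_zero, Real.sqrt_zero] at this
        exact this.mono_left nhdsWithin_le_nhds
      refine tendsto_of_tendsto_of_tendsto_of_le_of_le' tendsto_const_nhds this ?_ ?_
      · exact Eventually.of_forall fun t => by positivity
      · filter_upwards [self_mem_nhdsWithin] with t ht
        have ht : 0 < t := ht
        apply mul_le_of_le_one_right (by positivity)
        apply Real.exp_le_one_iff.mpr
        have : 0 ≤ Real.pi ^ 2 * k ^ 2 / t := by positivity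
        linarith
    have t2 : Tendsto (fun t : ℝ => 2 * Real.pi ^ 2 * |k| * erfc (Real.pi * |k| / Real.sqrt t)) (𝓝[>] 0) (𝓝 0) := by
      by_cases hk : k = 0
      · simp [hk]
      · have hk' : 0 < Real.pi * |k| := mul_pos Real.pi_pos (abs_pos.mpr hk)
        have s1 : Tendsto (fun t : ℝ => Real.sqrt t) (𝓝[>] 0) (𝓝[>] 0) := by
          apply tendsto_nhdsWithin_iff.mpr
          refine ⟨?_, ?_⟩
          · have := Real.continuous_sqrt.tendsto 0
            simp only [Real.sqrt_zero] at this
            exact this.mono_left nhdsWithin_le_nhds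
          · filter_upwards [self_mem_nhdsWithin] with t ht
            exact Real.sqrt_pos.mpr ht
        have s2 := (tendsto_inv_nhdsGT_zero.comp s1).const_mul_atTop hk'
        have := (erfc_tendsto.comp s2).const_mul (2 * Real.pi ^ 2 * |k|)
        simpa [Function.comp_def, div_eq_mul_inv] using this
    simpa using t1.sub t2
  have := intervalIntegral.integral_eq_sub_of_hasDerivAt_of_tendsto ha
    (fun t ht => hd t ht.1) (Kt_int k a ha) hlim
    ((hd a ha).continuousAt.tendsto.mono_left nhdsWithin_le_nhds)
  rw [Ik, this, sub_zero]


lemma norm_ee (x : ℂ) : ‖ee x‖ = Real.exp (-(2 * Real.pi * x.im)) := by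
  unfold ee
  rw [Complex.norm_exp]
  congr 1
  simp

lemma gsum (A B C : ℝ) (hA : 0 < A) : Summable fun n : ℤ => Real.exp (-A * n ^ 2 + B * n + C) := by
  have hpi : (Real.pi : ℂ) ≠ 0 := by exact_mod_cast Real.pi_ne_zero
  have h := ((summable_jacobiTheta₂_term_iff (-I * (B / (2 * Real.pi) : ℝ)) (I * (A / Real.pi : ℝ))).mpr
    (by simp only [mul_im, I_re, I_im, ofReal_re, ofReal_im, zero_mul, one_mul, zero_add]
        exact div_pos hA Real.pi_pos)).norm.mul_right (Real.exp C)
  refine h.congr fun n => ?_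
  rw [jacobiTheta₂_term, Complex.norm_exp, ← Real.exp_add]
  congr 1
  have : 2 * (Real.pi:ℂ) * I * n * (-I * (B / (2 * Real.pi) : ℝ)) + Real.pi * I * n ^ 2 * (I * (A / Real.pi : ℝ)) =
     ((-A * n^2 + B * n : ℝ) : ℂ) := by
    push_cast
    field_simp
    linear_combination ((A * n^2 : ℂ) - B * n) * (I_sq)
  rw [this, ofReal_re]

lemma ee_sub_ne_one (u : ℂ) (hu : ∀ n : ℤ, u + n ≠ 0) : ee u - 1 ≠ 0 := by
  intro h
  rw [sub_eq_zero, ee, Complex.exp_eq_one_iff] at h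
  obtain ⟨n, hn⟩ := h
  apply hu (-n)
  have hpi : (2 * Real.pi * I : ℂ) ≠ 0 := Complex.two_pi_I_ne_zero
  have : (2 * Real.pi * I : ℂ) * (u - n) = 0 := by linear_combination hn
  rcases mul_eq_zero.mp this with h | h
  · exact absurd h hpi
  · push_cast; linear_combination h

lemma Rc2_hasSum (c : ℝ) (u : ℂ) (hu : ∀ n : ℤ, u + n ≠ 0) :
    HasSum (fun n : ℤ => ee (c * (u + n)) / (u + n) ^ 2)
      ((2 * Real.pi * I) ^ 2 * Rc2 c (ee u)) := by
  have hy := ee_sub_ne_one u hu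
  have hy0 := ee_ne u
  have hpi : (2 * Real.pi * I : ℂ) ≠ 0 := Complex.two_pi_I_ne_zero
  set y := ee u with hyd
  set f : ℝ → ℂ := fun x => ee (-(x * u)) * (y / (y - 1) ^ 2 + x * (y / (y - 1))) with hf
  have hfc : Continuous f := by unfold f ee; fun_prop
  have hf01 : f 0 = f (1:ℝ) := by
    simp only [hf, ofReal_zero, ofReal_one, zero_mul, neg_zero, ee_zero, one_mul, ee_neg, ← hyd]
    field_simp; ring
  have : Fact ((0:ℝ) < 1) := ⟨one_pos⟩
  let F : C(AddCircle (1:ℝ), ℂ) := ⟨AddCircle.liftIco 1 0 f, AddCircle.liftIco_zero_continuous hf01 hfc.continuousOn⟩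
  have hcoef : ∀ n : ℤ, fourierCoeff F n = 1 / ((2 * Real.pi * I) ^ 2 * (u + n) ^ 2) := by
    intro n
    change fourierCoeff (AddCircle.liftIco 1 0 f) n = _
    rw [fourierCoeff_liftIco_eq, fourierCoeffOn_eq_integral]
    simp only [zero_add, sub_zero, div_one, one_smul, fourier_coe_apply, smul_eq_mul]
    set w : ℂ := -(2 * Real.pi * I * (u + n)) with hw
    have hw0 : w ≠ 0 := neg_ne_zero.mpr (mul_ne_zero hpi (hu n))
    have hd : ∀ x ∈ Set.uIcc (0:ℝ) 1, HasDerivAt (fun x : ℝ =>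
        ((y / (y - 1) ^ 2 + x * (y / (y - 1))) / w - (y / (y-1)) / w ^ 2) * cexp (w * x))
        (cexp (2 * Real.pi * I * (-n : ℤ) * x / (1:ℝ)) * f x) x := by
      intro x _
      have h1 : HasDerivAt (fun x : ℂ => ((y / (y - 1) ^ 2 + x * (y / (y - 1))) / w - (y / (y-1)) / w ^ 2))
         ((y / (y-1)) / w) (x:ℂ) := by
        have := ((((hasDerivAt_id (x:ℂ)).mul_const (y / (y-1))).const_add (y / (y - 1) ^ 2)).div_const w).sub_const ((y / (y-1)) / w ^ 2)
        simpa using this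
      have h2 : HasDerivAt (fun x : ℂ => cexp (w * x)) (cexp (w * x) * w) (x:ℂ) := by
        have := ((hasDerivAt_id (x:ℂ)).const_mul w).cexp
        simpa using this
      have h3 := (h1.mul h2).comp_ofReal
      refine h3.congr_deriv ?_
      have : cexp (w * x) = cexp (2 * Real.pi * I * (-n : ℤ) * x / (1:ℝ)) * ee (-(x * u)) := by
        unfold ee; rw [← Complex.exp_add]; congr 1; rw [hw]; push_cast; ring
      simp only [hf]
      rw [← mul_assoc (cexp (2 * Real.pi * I * (-n : ℤ) * x / (1:ℝ))), ← this]
      field_simp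
      ring
    rw [intervalIntegral.integral_eq_sub_of_hasDerivAt hd]
    · have hew : cexp (w * (1:ℝ)) = y⁻¹ := by
        rw [hyd, ← ee_neg, hw]
        have : ee (-u) = ee (-u - n) := by
          apply ee_eq_add_int _ _ n; ring
        rw [this, ee]; congr 1; push_cast; ring
      rw [hew]
      have : (2 * Real.pi * I) ^ 2 * (u + n) ^ 2 = w ^ 2 := by rw [hw]; ring
      rw [this]
      clear_value w y
      simp only [ofReal_zero, ofReal_one, mul_zero, Complex.exp_zero]
      field_simp
      ring
    · apply Continuous.intervalIntegrable
      fun_prop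
  have hsum : Summable (fourierCoeff F) := by
    have := (EisensteinSeries.linear_right_summable u 1 (k := 2) le_rfl).mul_left (1 / (2 * Real.pi * I : ℂ) ^ 2)
    refine this.congr fun n => ?_
    rw [hcoef]; field_simp; norm_cast; simp
  have H := has_pointwise_sum_fourier_series_of_summable hsum ((Int.fract c : ℝ) : AddCircle (1:ℝ))
  have hF : F ((Int.fract c : ℝ) : AddCircle (1:ℝ)) = f (Int.fract c) := by
    change AddCircle.liftIco 1 0 f _ = _
    rw [AddCircle.liftIco_coe_apply]
    simp [Int.fract_nonneg, Int.fract_lt_one]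
  rw [hF] at H
  have H2 := H.mul_left ((2 * Real.pi * I : ℂ) ^ 2 * ee (c * u))
  have hc : (c:ℂ) = Int.fract c + (⌊c⌋ : ℤ) := by
    rw [← ofReal_intCast, ← ofReal_add, Int.fract_add_floor]
  have E1 : (fun n : ℤ => ee (c * (u + n)) / (u + n) ^ 2) = fun i : ℤ =>
      (2 * Real.pi * I : ℂ) ^ 2 * ee (c * u) * (fourierCoeff F i • fourier i ((Int.fract c : ℝ) : AddCircle (1:ℝ))) := by
    funext n
    rw [hcoef, fourier_coe_apply]
    have : ee (c * (u + n)) = ee (c * u) * cexp (2 * Real.pi * I * n * (Int.fract c : ℝ) / (1:ℝ)) := by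
      rw [show cexp (2 * Real.pi * I * n * (Int.fract c : ℝ) / (1:ℝ)) = ee ((Int.fract c : ℝ) * n) by
        unfold ee; congr 1; push_cast; ring]
      rw [← ee_add]
      apply ee_eq_add_int _ _ (⌊c⌋ * n)
      push_cast
      linear_combination (n:ℂ) * hc
    rw [this, smul_eq_mul]
    have := hu n
    field_simp
  have E2 : (2 * Real.pi * I : ℂ) ^ 2 * Rc2 c y = (2 * Real.pi * I : ℂ) ^ 2 * ee (c * u) * f (Int.fract c) := by
    unfold Rc2
    simp only [hf]
    have e1 : y ^ (⌊c⌋ + 1) = ee (c * u) * ee (-((Int.fract c : ℝ) * u)) * y := by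
      rw [zpow_add_one₀ hy0, ← ee_add, hyd]
      congr 1
      rw [ee, ee, ← Complex.exp_int_mul]
      congr 1
      linear_combination (-(2 * Real.pi * I * u)) * hc
    rw [e1]
    have : (c:ℂ) - ⌊c⌋ = (Int.fract c : ℝ) := by rw [hc]; ring
    rw [this]
    clear_value y
    field_simp
  rw [E1, E2]
  exact H2

lemma poisson_gauss (c : ℝ) (w : ℂ) (t : ℝ) (ht : 0 < t) :
    ∑' n : ℤ, ee (c * (w + n)) * cexp (-t * (w + n) ^ 2) =
      ∑' n : ℤ, ee (n * w) * (Kt (n - c) t : ℂ) := by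
  have hpi : (Real.pi : ℂ) ≠ 0 := by exact_mod_cast Real.pi_ne_zero
  have htc : (t : ℂ) ≠ 0 := by exact_mod_cast ht.ne'
  have h := Complex.tsum_exp_neg_quadratic (a := ((t / Real.pi : ℝ) : ℂ))
    (by rw [ofReal_re]; exact div_pos ht Real.pi_pos) (I * c - t * w / Real.pi)
  have hs : 1 / ((t / Real.pi : ℝ) : ℂ) ^ (1 / 2 : ℂ) = ((Real.sqrt (Real.pi / t) : ℝ) : ℂ) := by
    rw [show (1/2 : ℂ) = ((1/2 : ℝ) : ℂ) by push_cast; rfl, ← ofReal_cpow (div_pos ht Real.pi_pos).le,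
      ← Real.sqrt_eq_rpow, ← ofReal_one, ← ofReal_div]
    congr 1
    rw [one_div, ← Real.sqrt_inv, inv_div]
  rw [hs] at h
  have e1 : ∀ n : ℤ, ee (c * (w + n)) * cexp (-t * (w + n) ^ 2) =
      (ee (c * w) * cexp (-t * w^2)) * cexp (-Real.pi * ((t / Real.pi : ℝ) : ℂ) * n ^ 2 + 2 * Real.pi * (I * c - t * w / Real.pi) * n) := by
    intro n
    unfold ee
    rw [← Complex.exp_add, ← Complex.exp_add, ← Complex.exp_add]
    congr 1
    push_cast
    field_simp
    ring
  have e2 : ∀ n : ℤ, ee (n * w) * (Kt (n - c) t : ℂ) =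
     (ee (c * w) * cexp (-t * w^2)) * ((Real.sqrt (Real.pi / t) : ℝ) : ℂ) * cexp (-Real.pi / ((t / Real.pi : ℝ) : ℂ) * (n + I * (I * c - t * w / Real.pi)) ^ 2) := by
    intro n
    have : (Kt (n - c) t : ℂ) = ((Real.sqrt (Real.pi / t) : ℝ) : ℂ) * cexp (-(Real.pi^2 * (n - c)^2 / t)) := by
      unfold Kt; push_cast; rfl
    rw [this]
    unfold ee
    have : ∀ A B C D S : ℂ, A + B = C + D → cexp A * (S * cexp B) = cexp C * S * cexp D := by
      intro A B C D S h
      rw [mul_left_comm, ← Complex.exp_add, h, Complex.exp_add]; ring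
    rw [← Complex.exp_add]
    apply this
    push_cast
    rw [show I * (I * c - t * w / Real.pi) = -c - I * t * w / Real.pi by linear_combination (c:ℂ) * I_sq]
    field_simp
    ring_nf
    rw [I_sq]
    ring
  simp_rw [e1, e2, tsum_mul_left]
  rw [h]; ring

lemma Ik_sum (a c : ℝ) (w : ℂ) (ha : 0 < a) :
    Summable fun n : ℤ => ‖ee (n * w)‖ * Ik a (n - c) := by
  have h := (gsum (Real.pi^2 / a) (2 * Real.pi^2 * c / a - 2 * Real.pi * w.im) (-(Real.pi^2 * c^2 / a))
    (by have := Real.pi_pos; positivity)).mul_left (∫ t in (0:ℝ)..a, Real.sqrt (Real.pi / t))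
  refine h.of_nonneg_of_le (fun n => mul_nonneg (norm_nonneg _) (Ik_nonneg a _ ha)) fun n => ?_
  calc _ ≤ ‖ee (n * w)‖ * ((∫ t in (0:ℝ)..a, Real.sqrt (Real.pi / t)) * Real.exp (-(Real.pi ^ 2 * (n - c) ^ 2 / a))) := by
        gcongr; exact Ik_le a _ ha
    _ = _ := by
        rw [mul_left_comm, norm_ee, ← Real.exp_add]
        congr 2
        simp
        ring

lemma gauss_sum_integral (a c : ℝ) (w : ℂ) (ha : 0 < a) :
    HasSum (fun n : ℤ => ∫ t in (0:ℝ)..a, ee (c * (w + n)) * cexp (-t * (w + n) ^ 2))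
      (∑' n : ℤ, ee (n * w) * (Ik a (n - c) : ℂ)) := by
  simp_rw [intervalIntegral.integral_of_le ha.le]
  have hI : ∀ n : ℤ, Integrable (fun t : ℝ => ee (c * (w + n)) * cexp (-t * (w + n) ^ 2)) (volume.restrict (Set.Ioc 0 a)) := by
    intro n
    have : Continuous (fun t : ℝ => ee (c * (w + n)) * cexp (-t * (w + n) ^ 2)) := by fun_prop
    exact (this.intervalIntegrable 0 a).1
  have hS : Summable fun n : ℤ => ∫ t in Set.Ioc 0 a, ‖ee (c * (w + n)) * cexp (-t * (w + n) ^ 2)‖ := by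
    have hb := ((EisensteinSeries.linear_right_summable (w.re + I) 1 (k := 2) le_rfl).norm).mul_left
      (Real.exp (-(2 * Real.pi * (c * w.im))) * Real.exp (a * w.im ^ 2 + a))
    refine hb.of_nonneg_of_le (fun n => integral_nonneg fun t => norm_nonneg _) fun n => ?_
    set b : ℝ := (w.re + n) ^ 2 + 1 with hbd
    have hb0 : 0 < b := by positivity
    have e0 : ‖(((1:ℤ) * (w.re + I) + n : ℂ) ^ (2:ℤ))⁻¹‖ = 1 / b := by
      rw [norm_inv, one_div, zpow_ofNat, norm_pow, ← Complex.normSq_eq_norm_sq]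
      congr 1
      rw [Complex.normSq_apply, hbd]
      simp; ring
    rw [e0]
    have hle : ∀ t ∈ Set.Ioc 0 a, ‖ee (c * (w + n)) * cexp (-t * (w + n) ^ 2)‖ ≤
        (Real.exp (-(2 * Real.pi * (c * w.im))) * Real.exp (a * w.im ^ 2 + a)) * Real.exp (-b * t) := by
      intro t ht
      rw [norm_mul, norm_ee, Complex.norm_exp, mul_assoc, ← Real.exp_add, ← Real.exp_add, ← Real.exp_add]
      apply Real.exp_le_exp.mpr
      have h1 : ((c:ℂ) * (w + n)).im = c * w.im := by simp
      have h2 : (-(t:ℂ) * (w + n) ^ 2).re = -t * ((w.re + n)^2 - w.im^2) := by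
        rw [← ofReal_neg, re_ofReal_mul, sq (w + n), mul_re, add_re, add_im, intCast_re, intCast_im]; ring
      rw [h1, h2, hbd]
      nlinarith [mul_nonneg (sub_nonneg.mpr ht.2) (sq_nonneg w.im), ht.2]
    have hexp : ∫ t in (0:ℝ)..a, Real.exp (-b * t) ≤ 1 / b := by
      have h1 := integral_exp_mul_Ioi (neg_lt_zero.mpr hb0) 0
      have h2 := integrableOn_exp_mul_Ioi (neg_lt_zero.mpr hb0) 0
      rw [intervalIntegral.integral_of_le ha.le]
      refine (setIntegral_mono_set h2 (Eventually.of_forall fun t => (Real.exp_pos _).le)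
        (Set.Ioc_subset_Ioi_self.eventuallyLE)).trans ?_
      rw [h1]; simp
    calc _ ≤ ∫ t in Set.Ioc 0 a, (Real.exp (-(2 * Real.pi * (c * w.im))) * Real.exp (a * w.im ^ 2 + a)) * Real.exp (-b * t) := by
          apply setIntegral_mono_on (hI n).norm _ measurableSet_Ioc hle
          have : Continuous (fun t : ℝ => (Real.exp (-(2 * Real.pi * (c * w.im))) * Real.exp (a * w.im ^ 2 + a)) * Real.exp (-b * t)) := by fun_prop
          exact (this.intervalIntegrable 0 a).1
      _ ≤ _ := by
          rw [integral_const_mul, ← intervalIntegral.integral_of_le ha.le]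
          gcongr
  have H1 := hasSum_integral_of_summable_integral_norm hI hS
  have hK : ∀ n : ℤ, Integrable (fun t : ℝ => ee (n * w) * (Kt (n - c) t : ℂ)) (volume.restrict (Set.Ioc 0 a)) := by
    intro n
    exact ((Kt_int (n-c) a ha).1.ofReal).const_mul _
  have hKn : ∀ n : ℤ, ∫ t in Set.Ioc 0 a, ‖ee (n * w) * (Kt (n - c) t : ℂ)‖ = ‖ee (n * w)‖ * Ik a (n - c) := by
    intro n
    simp_rw [norm_mul, Complex.norm_real, Real.norm_of_nonneg (Kt_nonneg _ _)]
    rw [integral_const_mul, Ik, intervalIntegral.integral_of_le ha.le]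
  have H2 := hasSum_integral_of_summable_integral_norm hK (by simp_rw [hKn]; exact Ik_sum a c w ha)
  have e : ∫ t in Set.Ioc 0 a, ∑' n : ℤ, ee (c * (w + n)) * cexp (-t * (w + n) ^ 2) =
      ∫ t in Set.Ioc 0 a, ∑' n : ℤ, ee (n * w) * (Kt (n - c) t : ℂ) :=
    setIntegral_congr_fun measurableSet_Ioc fun t ht => poisson_gauss c w t ht.1
  rw [e, ← H2.tsum_eq] at H1
  have E : ∀ n : ℤ, ee (n * w) * (Ik a (n - c) : ℂ) = ∫ t in Set.Ioc 0 a, ee (n * w) * (Kt (n - c) t : ℂ) := by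
    intro n
    rw [integral_const_mul, Ik, intervalIntegral.integral_of_le ha.le, integral_complex_ofReal]
  simp_rw [E]
  exact H1


def cc (m : ℕ) (s : ℚ × ℚ) : ℝ := ((-(2 * (m : ℚ) * s.1) : ℚ) : ℝ)

lemma cc_eq (m : ℕ) (s : ℚ × ℚ) : cc m s = -(2 * m * (s.1 : ℝ)) := by
  unfold cc; push_cast; ring

lemma cc_eqC (m : ℕ) (s : ℚ × ℚ) : (cc m s : ℂ) = -(2 * m * ((s.1 : ℚ) : ℂ)) := by
  rw [cc_eq]; push_cast; ring

lemma Pt_eq (m : ℕ) (s : ℚ × ℚ) (τ z : ℂ) (l n : ℤ) :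
    Pt m s τ z (l, n) = (ee ((m : ℂ) * (l : ℂ) ^ 2 * τ + 2 * (m : ℂ) * (l : ℂ) * z) *
        ee (-(m : ℂ) * (s.1 : ℚ) * zpt s τ)) *
      (ee (cc m s * ((z - zpt s τ + l * τ) + n)) *
        (cexp (-((Real.pi * m / τ.im : ℝ) : ℂ) * ((z - zpt s τ + l * τ) + n) ^ 2) /
          ((z - zpt s τ + l * τ) + n) ^ 2)) := by
  have h : z + Xp s τ (l, n) = (z - zpt s τ + l * τ) + n := by
    simp only [Xp, zpt]; ring
  unfold Pt
  rw [h, ← mul_assoc _ (ee _) (_ / _), ← ee_add, ← ee_add]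
  congr 1
  · apply ee_eq_add_int _ _ ((m:ℤ) * (l * n))
    rw [cc_eqC]
    simp only [Xp, zpt]; push_cast; ring
  · push_cast; rfl

lemma gauss_div (a : ℝ) (U : ℂ) (hU : U ≠ 0) :
    cexp (-(a:ℂ) * U ^ 2) / U ^ 2 = 1 / U ^ 2 - ∫ t in (0:ℝ)..a, cexp (-t * U ^ 2) := by
  have h := integral_exp_mul_complex (a := 0) (b := a) (c := -U^2) (neg_ne_zero.mpr (pow_ne_zero 2 hU))
  have e : ∀ t : ℝ, cexp (-t * U ^ 2) = cexp (-U^2 * t) := fun t => by congr 1; ring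
  simp_rw [e]
  rw [h]
  simp
  field_simp
  ring

lemma row_hasSum (a c : ℝ) (w : ℂ) (ha : 0 < a) (hw : ∀ n : ℤ, w + n ≠ 0) :
    HasSum (fun n : ℤ => ee (c * (w + n)) * (cexp (-(a:ℂ) * (w + n) ^ 2) / (w + n) ^ 2))
      ((2 * Real.pi * I) ^ 2 * Rc2 c (ee w) - ∑' n : ℤ, ee (n * w) * (Ik a (n - c) : ℂ)) := by
  have h := (Rc2_hasSum c w hw).sub (gauss_sum_integral a c w ha)
  have e : (fun n : ℤ => ee (c * (w + n)) * (cexp (-(a:ℂ) * (w + n) ^ 2) / (w + n) ^ 2)) =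
    fun n : ℤ => ee (c * (w + n)) / (w + n) ^ 2 - ∫ t in (0:ℝ)..a, ee (c * (w + n)) * cexp (-t * (w + n) ^ 2) := by
    funext n
    rw [gauss_div a _ (hw n), intervalIntegral.integral_const_mul]; ring
  rw [e]; exact h

lemma Pt_summable (m : ℕ) (hm : 0 < m) (s : ℚ × ℚ) (τ : ℂ) (hτ : 0 < τ.im) (z : ℂ) :
    Summable (Pt m s τ z) := by
  have hmR : (0:ℝ) < m := by exact_mod_cast hm
  set κ : ℝ := Real.pi * m / τ.im with hκ
  have hκ0 : 0 < κ := by have := Real.pi_pos; positivity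
  set W : ℤ × ℤ → ℂ := fun p => z + Xp s τ p with hW
  -- norm
  have hnorm : ∀ p, ‖Pt m s τ z p‖ =
      Real.exp (2 * κ * z.im ^ 2) * Real.exp (-κ * ‖W p‖ ^ 2) / ‖W p‖ ^ 2 := by
    intro p
    unfold Pt
    rw [norm_mul, norm_ee, norm_div, Complex.norm_exp, norm_pow, ← mul_div_assoc, ← Real.exp_add, ← Real.exp_add]
    congr 2
    have h1 : ‖W p‖ ^ 2 = (W p).re ^ 2 + (W p).im ^ 2 := by
      rw [← Complex.normSq_eq_norm_sq, Complex.normSq_apply]; ring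
    have h2 : (-((Real.pi : ℂ) * (m : ℂ) / (τ.im : ℂ)) * (z + Xp s τ p) ^ 2).re = -κ * ((W p).re ^ 2 - (W p).im ^ 2) := by
      have : (-((Real.pi : ℂ) * (m : ℂ) / (τ.im : ℂ))) = ((-κ : ℝ) : ℂ) := by rw [hκ]; push_cast; ring
      rw [this, re_ofReal_mul, sq (z + Xp s τ p), mul_re]; simp only [hW]; ring
    have h3 : (W p).im = z.im + (p.1 - s.1) * τ.im := by
      simp [hW, Xp]
    have h4 : ((m : ℂ) * ((p.1 : ℂ) * (s.2 : ℚ) - (s.1 : ℚ) * (p.2 : ℂ)) +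
      (m : ℂ) * ((p.1 : ℂ) - (s.1 : ℚ)) * (2 * z + Xp s τ p)).im = m * (p.1 - s.1) * (2 * z.im + (p.1 - s.1) * τ.im) := by
      simp [Xp]
    rw [h1, h2, h3, h4, hκ]
    field_simp
    ring
  -- Gaussian
  set w0 : ℂ := z - s.1 * τ - s.2 with hw0
  have hWl : ∀ p : ℤ × ℤ, W p = (p.1 * τ + p.2) + w0 := by
    intro p; simp only [hW, Xp, hw0]; ring
  set D : ℝ := 2 + (1 + 2 * τ.re ^ 2) / τ.im ^ 2 with hD
  have hD0 : 0 < D := by positivity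
  have hq : ∀ p : ℤ × ℤ, ((p.1:ℝ) ^ 2 + (p.2:ℝ) ^ 2) ≤ D * (2 * ‖W p‖ ^ 2 + 2 * ‖w0‖ ^ 2) := by
    intro p
    set A : ℝ := ‖(p.1 * τ + p.2 : ℂ)‖ ^ 2 with hA
    have hA1 : A = (p.1 * τ.re + p.2) ^ 2 + (p.1 * τ.im) ^ 2 := by
      rw [hA, ← Complex.normSq_eq_norm_sq, Complex.normSq_apply]; simp; ring
    have hA2 : A ≤ 2 * ‖W p‖ ^ 2 + 2 * ‖w0‖ ^ 2 := by
      have : ‖(p.1 * τ + p.2 : ℂ)‖ ≤ ‖W p‖ + ‖w0‖ := by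
        have := norm_sub_le (W p) w0
        rwa [hWl p, add_sub_cancel_right, ← hWl p] at this
      rw [hA]
      nlinarith [norm_nonneg (p.1 * τ + p.2 : ℂ), norm_nonneg (W p), norm_nonneg w0, sq_nonneg (‖W p‖ - ‖w0‖)]
    have hl : (p.1:ℝ) ^ 2 ≤ A / τ.im ^ 2 := by
      rw [le_div_iff₀ (by positivity)]; nlinarith [sq_nonneg (p.1 * τ.re + p.2)]
    have hA0 : 0 ≤ A := by positivity
    have hm2 : (p.2:ℝ) ^ 2 ≤ 2 * A + 2 * (p.1 : ℝ)^2 * τ.re ^ 2 := by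
      nlinarith [sq_nonneg (p.2 + 2 * p.1 * τ.re), sq_nonneg (p.1 * τ.im)]
    calc _ ≤ D * A := by
          have e : D * A = 2 * A + (1 + 2 * τ.re ^ 2) * (A / τ.im ^ 2) := by rw [hD]; field_simp
          rw [e]
          have := mul_le_mul_of_nonneg_left hl (by positivity : (0:ℝ) ≤ 1 + 2 * τ.re ^ 2)
          linarith
      _ ≤ _ := by gcongr
  have hG : Summable fun p : ℤ × ℤ => Real.exp (-κ * ‖W p‖ ^ 2) := by
    have g := gsum (κ / (2 * D)) 0 0 (by positivity)
    have g2 := (g.mul_of_nonneg g (fun _ => (Real.exp_pos _).le) (fun _ => (Real.exp_pos _).le)).mul_left (Real.exp (κ * ‖w0‖ ^ 2))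
    refine g2.of_nonneg_of_le (fun _ => (Real.exp_pos _).le) fun p => ?_
    rw [← Real.exp_add, ← Real.exp_add]
    apply Real.exp_le_exp.mpr
    have := mul_le_mul_of_nonneg_left (hq p) (by positivity : (0:ℝ) ≤ κ / (2 * D))
    have e : κ / (2 * D) * (D * (2 * ‖W p‖ ^ 2 + 2 * ‖w0‖ ^ 2)) = κ * ‖W p‖ ^ 2 + κ * ‖w0‖ ^ 2 := by
      field_simp
    rw [e] at this
    linarith
  have hG2 := hG.mul_left (Real.exp (2 * κ * z.im ^ 2))
  apply hG2.of_norm_bounded_eventually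
  have hev : ∀ᶠ p in cofinite, Real.exp (-κ * ‖W p‖ ^ 2) < Real.exp (-κ) :=
    hG.tendsto_cofinite_zero.eventually (gt_mem_nhds (Real.exp_pos _))
  filter_upwards [hev] with p hp
  rw [hnorm p]
  have h1 : 1 ≤ ‖W p‖ ^ 2 := by
    have := Real.exp_lt_exp.mp hp
    nlinarith
  exact div_le_self (by positivity) h1

def Tm (m : ℕ) (τ z : ℂ) (r : ℤ) : ℂ := ee ((r : ℂ) ^ 2 / (4 * (m : ℂ)) * τ + (r : ℂ) * z)

def Hn (m : ℕ) (s : ℚ × ℚ) (τ : ℂ) (n : ℤ) : ℂ :=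
  ee (-(m : ℂ) * (s.1 : ℚ) * zpt s τ - (n : ℂ) ^ 2 / (4 * (m : ℂ)) * τ - n * zpt s τ) *
    (Ik (Real.pi * m / τ.im) (n - cc m s) : ℂ)

lemma Tm_sum (m : ℕ) (hm : 0 < m) (τ : ℂ) (hτ : 0 < τ.im) (z : ℂ) :
    Summable fun r => ‖Tm m τ z r‖ := by
  have hmR : (0:ℝ) < m := by exact_mod_cast hm
  have := Real.pi_pos
  refine (gsum (2 * Real.pi * τ.im / (4 * m)) (-(2 * Real.pi * z.im)) 0 (by positivity)).congr fun r => ?_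
  rw [Tm, norm_ee]
  congr 1
  have : ((r : ℂ) ^ 2 / (4 * (m : ℂ)) * τ + (r : ℂ) * z).im = (r:ℝ)^2 / (4 * m) * τ.im + r * z.im := by
    have : ((r : ℂ) ^ 2 / (4 * (m : ℂ))) = (((r:ℝ)^2 / (4 * m) : ℝ) : ℂ) := by push_cast; rfl
    rw [this, add_im, im_ofReal_mul]; simp
  rw [this]; ring

lemma Hn_sum (m : ℕ) (hm : 0 < m) (s : ℚ × ℚ) (τ : ℂ) (hτ : 0 < τ.im) :
    Summable fun n => ‖Hn m s τ n‖ := by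
  have hmR : (0:ℝ) < m := by exact_mod_cast hm
  have hpi := Real.pi_pos
  set a := Real.pi * m / τ.im with ha
  have ha0 : 0 < a := by positivity
  have h := (gsum (Real.pi * τ.im / (2 * m)) (-(2 * Real.pi * s.1 * τ.im))
    (-(2 * Real.pi * m * s.1^2 * τ.im)) (by positivity)).mul_left (∫ t in (0:ℝ)..a, Real.sqrt (Real.pi / t))
  refine h.of_nonneg_of_le (fun n => norm_nonneg _) fun n => ?_
  have e : ‖Hn m s τ n‖ = Real.exp (2 * Real.pi * τ.im * (m * s.1 ^ 2 + n ^ 2 / (4 * m) + n * s.1)) * Ik a (n - cc m s) := by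
    rw [Hn, norm_mul, norm_ee, Complex.norm_real, Real.norm_of_nonneg (Ik_nonneg _ _ ha0)]
    congr 2
    have e1 : (zpt s τ).im = s.1 * τ.im := by simp [zpt]
    have e2 : (-(m : ℂ) * (s.1 : ℚ) * zpt s τ - (n : ℂ) ^ 2 / (4 * (m : ℂ)) * τ - n * zpt s τ) =
       ((-(m * s.1) : ℝ) : ℂ) * zpt s τ - ((n^2 / (4*m) : ℝ) : ℂ) * τ - ((n:ℝ):ℂ) * zpt s τ := by
      push_cast; ring
    rw [e2, sub_im, sub_im, im_ofReal_mul, im_ofReal_mul, im_ofReal_mul, e1]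
    ring
  rw [e]
  calc _ ≤ _ := mul_le_mul_of_nonneg_left (Ik_le a _ ha0) (Real.exp_pos _).le
    _ = _ := by
      rw [mul_left_comm, ← Real.exp_add]
      congr 2
      rw [cc_eq, ha]
      field_simp
      ring

lemma jTheta_eq (m : ℕ) (l : ℤ) (τ z : ℂ) : jTheta m l τ z = ∑' n : ℤ, Tm m τ z (l + 2 * m * n) := by
  unfold jTheta Tm
  push_cast; rfl

lemma jTheta_period (m : ℕ) (l k : ℤ) (τ z : ℂ) : jTheta m (l + 2 * m * k) τ z = jTheta m l τ z := by
  rw [jTheta_eq, jTheta_eq, ← Equiv.tsum_eq (Equiv.addLeft k) (fun n : ℤ => Tm m τ z (l + 2 * m * n))]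
  apply tsum_congr; intro n
  congr 1; simp; ring

lemma term_eq (m : ℕ) (hm : 0 < m) (s : ℚ × ℚ) (τ z : ℂ) (l n : ℤ) :
    (ee ((m : ℂ) * (l : ℂ) ^ 2 * τ + 2 * (m : ℂ) * (l : ℂ) * z) *
        ee (-(m : ℂ) * (s.1 : ℚ) * zpt s τ)) *
      (ee (n * (z - zpt s τ + l * τ)) * (Ik (Real.pi * m / τ.im) (n - cc m s) : ℂ)) =
    Hn m s τ n * Tm m τ z (n + 2 * m * l) := by
  have hmC : (m:ℂ) ≠ 0 := by exact_mod_cast hm.ne'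
  unfold Hn Tm
  have : ∀ A B C D E K : ℂ, A + B + C = D + E → ee A * ee B * (ee C * K) = ee D * K * ee E := by
    intro A B C D E K h
    rw [← ee_add, ← mul_assoc, ← ee_add, h, ee_add]; ring
  apply this
  push_cast
  field_simp
  ring

lemma pair_sum (m : ℕ) (hm : 0 < m) (s : ℚ × ℚ) (τ : ℂ) (hτ : 0 < τ.im) (z : ℂ) :
    Summable fun p : ℤ × ℤ => Hn m s τ p.2 * Tm m τ z (p.2 + 2 * m * p.1) := by
  have h := summable_mul_of_summable_norm (Hn_sum m hm s τ hτ) (Tm_sum m hm τ hτ z)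
  have hinj : Function.Injective fun p : ℤ × ℤ => (p.2, p.2 + 2 * (m:ℤ) * p.1) := by
    intro p q h
    have h1 : p.2 = q.2 := congrArg Prod.fst h
    have h2 : p.2 + 2 * (m:ℤ) * p.1 = q.2 + 2 * (m:ℤ) * q.1 := congrArg Prod.snd h
    have hm' : (2 * (m:ℤ)) ≠ 0 := by omega
    exact Prod.ext (mul_left_cancel₀ hm' (by linarith)) h1
  have h3 := h.comp_injective hinj
  exact h3.congr fun p => rfl

lemma sum_mod (N : ℕ) (hN : 0 < N) (f : ℤ → ℂ) (hf : Summable f) :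
    ∑' n, f n = ∑ l ∈ Finset.range N, ∑' k : ℤ, f (l + N * k) := by
  have : NeZero N := ⟨hN.ne'⟩
  have hf' := (Int.divModEquiv N).symm.summable_iff.mpr hf
  rw [← Equiv.tsum_eq (Int.divModEquiv N).symm f]
  have hf2 : Summable (fun p : Fin N × ℤ => f ((Int.divModEquiv N).symm ((Equiv.prodComm (Fin N) ℤ) p))) :=
    (Equiv.prodComm (Fin N) ℤ).summable_iff.mpr hf'
  rw [← Equiv.tsum_eq (Equiv.prodComm (Fin N) ℤ) (fun p => f ((Int.divModEquiv N).symm p))]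
  rw [hf2.tsum_prod, tsum_fintype, Finset.sum_range]
  apply Finset.sum_congr rfl; intro l _
  apply tsum_congr; intro k
  simp [Int.divModEquiv]
  congr 1; ring

lemma star_eq (m : ℕ) (hm : 0 < m) (s : ℚ × ℚ) (τ : ℂ) (hτ : 0 < τ.im) (l : ℤ) :
    ∑' k : ℤ, Hn m s τ (l + 2 * m * k) = 4 * Real.pi ^ 2 * m * thSstar m s l τ := by
  have hmR : (0:ℝ) < m := by exact_mod_cast hm
  have hmC : (m:ℂ) ≠ 0 := by exact_mod_cast hm.ne'
  have hpi := Real.pi_pos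
  set a := Real.pi * m / τ.im with ha
  have ha0 : 0 < a := by positivity
  have hconj : (starRingEnd ℂ) τ = τ - 2 * I * (τ.im : ℂ) := by
    apply Complex.ext <;> simp; ring
  set lv : ℤ → ℝ := lamVal m s l with hlv
  have hk : ∀ k : ℤ, ((l + 2 * m * k : ℤ) : ℝ) - cc m s = 2 * m * lv k := by
    intro k; rw [cc_eq, hlv, lamVal]; push_cast; field_simp; ring
  set u1 : ℤ → ℂ := fun k => (starRingEnd ℂ) (ee (2 * (m : ℂ) * (s.2 : ℚ) * (lv k : ℝ)) *
      ee ((m : ℂ) * (lv k : ℝ) ^ 2 * τ)) with hu1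
  set u2 : ℤ → ℂ := fun k => (|lv k| : ℝ) *
        ee (-(2 * (m : ℂ) * (s.2 : ℚ) * (lv k : ℝ))) *
        (erfc (2 * |lv k| * Real.sqrt (Real.pi * (m : ℝ) * τ.im)) : ℂ) *
        ee (-(m : ℂ) * (lv k : ℝ) ^ 2 * τ) with hu2
  have hcee : ∀ x : ℂ, (starRingEnd ℂ) (ee x) = ee (-(starRingEnd ℂ) x) := by
    intro x; unfold ee; rw [← Complex.exp_conj]; congr 1; simp only [map_mul, map_ofNat, conj_ofReal, conj_I]; ring
  have hI : ∀ k, Ik a (((l + 2 * m * k : ℤ) : ℝ) - cc m s) =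
      2 * Real.pi * Real.sqrt (m / τ.im) * Real.exp (-(4 * Real.pi * m * lv k ^ 2 * τ.im)) -
      4 * Real.pi ^ 2 * m * |lv k| * erfc (2 * |lv k| * Real.sqrt (Real.pi * (m : ℝ) * τ.im)) := by
    intro k
    rw [Ik_eq a _ ha0, hk]
    have e1 : Real.sqrt (Real.pi * a) = Real.pi * Real.sqrt (m / τ.im) := by
      rw [ha, show Real.pi * (Real.pi * m / τ.im) = Real.pi ^ 2 * (m / τ.im) by ring, Real.sqrt_mul (by positivity), Real.sqrt_sq hpi.le]
    have e2 : Real.pi ^ 2 * (2 * m * lv k) ^ 2 / a = 4 * Real.pi * m * lv k ^ 2 * τ.im := by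
      rw [ha]; field_simp; ring
    have e3 : |2 * m * lv k| = 2 * m * |lv k| := by
      rw [abs_mul, abs_of_pos (by positivity)]
    have e4 : Real.pi * (2 * m * |lv k|) / Real.sqrt a = 2 * |lv k| * Real.sqrt (Real.pi * m * τ.im) := by
      have hs : 0 < Real.sqrt a := Real.sqrt_pos.mpr ha0
      rw [div_eq_iff hs.ne', mul_assoc, mul_assoc, ← Real.sqrt_mul (by positivity), ha,
        show Real.pi * m * τ.im * (Real.pi * m / τ.im) = (Real.pi * m) ^ 2 by field_simp,
        Real.sqrt_sq (by positivity)]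
      ring
    rw [e1, e2, e3, e4]
    ring
  set K : ℂ := ee ((m : ℂ) * (s.1 : ℚ) * (s.2 : ℚ)) with hK
  have hterm : ∀ k, Hn m s τ (l + 2 * m * k) =
      (2 * Real.pi * (Real.sqrt (m / τ.im) : ℝ) * K) * u1 k - (4 * Real.pi ^ 2 * m * K) * u2 k := by
    intro k
    unfold Hn
    rw [← ha, hI k]
    have hlC : (lv k : ℂ) = k + s.1 + l / (2 * m) := by rw [hlv, lamVal]; push_cast; ring
    have e1 : ee (-(m : ℂ) * (s.1 : ℚ) * zpt s τ - ((l + 2 * m * k : ℤ) : ℂ) ^ 2 / (4 * (m : ℂ)) * τ - ((l + 2 * m * k : ℤ) : ℂ) * zpt s τ)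
        = K * ee (-(2 * (m : ℂ) * (s.2 : ℚ) * (lv k : ℝ))) * ee (-(m : ℂ) * (lv k : ℝ) ^ 2 * τ) := by
      rw [hK, ← ee_add, ← ee_add]
      congr 1
      rw [hlC, zpt]; push_cast; field_simp; ring
    have e2 : u1 k = ee (-(2 * (m : ℂ) * (s.2 : ℚ) * (lv k : ℝ))) * ee (-(m : ℂ) * (lv k : ℝ) ^ 2 * τ) *
        (Real.exp (-(4 * Real.pi * m * lv k ^ 2 * τ.im)) : ℝ) := by
      simp only [hu1]
      rw [map_mul, hcee, hcee]
      simp only [map_mul, map_pow, conj_ofReal, map_natCast, map_ratCast, map_ofNat, hconj]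
      unfold ee
      rw [ofReal_exp, ← Complex.exp_add, ← Complex.exp_add, ← Complex.exp_add]
      congr 1
      push_cast
      linear_combination (4 * Real.pi * m * lv k ^ 2 * τ.im : ℂ) * I_sq
    rw [e1, e2]
    simp only [hu2]
    push_cast
    ring
  have hs1 : Summable u1 := by
    have h := gsum (2 * Real.pi * m * τ.im) (-(4 * Real.pi * m * τ.im * (s.1 + l / (2 * m))))
      (-(2 * Real.pi * m * τ.im * (s.1 + l / (2 * m))^2)) (by positivity)
    apply Summable.of_norm
    refine h.congr fun k => ?_
    simp only [hu1]
    rw [RCLike.norm_conj, norm_mul, norm_ee, norm_ee, ← Real.exp_add]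
    congr 1
    have e1 : (2 * (m : ℂ) * (s.2 : ℚ) * (lv k : ℝ)).im = 0 := by
      rw [show (2 * (m : ℂ) * (s.2 : ℚ) * (lv k : ℝ)) = ((2 * m * s.2 * lv k : ℝ) : ℂ) by push_cast; rfl, ofReal_im]
    have e2 : ((m : ℂ) * (lv k : ℝ) ^ 2 * τ).im = m * lv k ^ 2 * τ.im := by
      rw [show ((m : ℂ) * (lv k : ℝ) ^ 2) = ((m * lv k ^ 2 : ℝ) : ℂ) by push_cast; rfl, im_ofReal_mul]
    rw [e1, e2, hlv, lamVal]
    ring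
  have hK0 : K ≠ 0 := ee_ne _
  have hpiC : (Real.pi : ℂ) ≠ 0 := by exact_mod_cast hpi.ne'
  have hsH : Summable fun k : ℤ => Hn m s τ (l + 2 * m * k) := by
    apply (Summable.of_norm (Hn_sum m hm s τ hτ)).comp_injective (i := fun k : ℤ => l + 2 * m * k)
    intro a b hab
    have hm' : (2 * (m:ℤ)) ≠ 0 := by positivity
    exact mul_left_cancel₀ hm' (add_left_cancel hab)
  have hs2 : Summable u2 := by
    have := ((hs1.mul_left (2 * Real.pi * (Real.sqrt (m / τ.im) : ℝ) * K)).sub hsH).mul_left (4 * Real.pi ^ 2 * m * K)⁻¹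
    refine this.congr fun k => ?_
    rw [hterm]
    field_simp
    ring
  simp_rw [hterm]
  rw [Summable.tsum_sub (hs1.mul_left _) (hs2.mul_left _), tsum_mul_left, tsum_mul_left]
  unfold thSstar thS
  rw [map_mul, Complex.conj_tsum, hcee]
  have e5 : ee (-(starRingEnd ℂ) (-(m : ℂ) * (s.1 : ℚ) * (s.2 : ℚ))) = K := by
    rw [hK]; congr 1; simp
  rw [e5]
  change _ = 4 * Real.pi ^ 2 * m * (K * (∑' k, u1 k) / _ - K * ∑' k, u2 k)
  have e6 : Real.sqrt (m / τ.im) = m / Real.sqrt (m * τ.im) := by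
    rw [eq_div_iff (Real.sqrt_pos.mpr (by positivity)).ne', ← Real.sqrt_mul (by positivity),
      show m / τ.im * (m * τ.im) = (m:ℝ) ^ 2 by field_simp, Real.sqrt_sq hmR.le]
  have e7 : ((Real.sqrt (m * τ.im) : ℝ) : ℂ) ≠ 0 := by
    exact_mod_cast (Real.sqrt_pos.mpr (by positivity)).ne'
  rw [e6]
  push_cast
  field_simp
  ring

lemma Bhat_eq (m : ℕ) (hm : 0 < m) (s : ℚ × ℚ) (τ : ℂ) (hτ : 0 < τ.im) (z : ℂ)
    (hz : ∀ a b : ℤ, z ≠ zpt s τ + (a : ℂ) * τ + (b : ℂ)) :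
    BhatB m s τ z = -(1 / (4 * (Real.pi:ℂ)^2)) * ∑' p : ℤ × ℤ, Pt m s τ z p := by
  have hmR : (0:ℝ) < m := by exact_mod_cast hm
  have hpi := Real.pi_pos
  have hpiC : (Real.pi : ℂ) ≠ 0 := by exact_mod_cast hpi.ne'
  set a := Real.pi * m / τ.im with ha
  have ha0 : 0 < a := by positivity
  set A : ℤ → ℂ := fun l => ee ((m : ℂ) * (l : ℂ) ^ 2 * τ + 2 * (m : ℂ) * (l : ℂ) * z) *
        ee (-(m : ℂ) * (s.1 : ℚ) * zpt s τ) with hA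
  set w : ℤ → ℂ := fun l => z - zpt s τ + l * τ with hw
  have hw0 : ∀ l n : ℤ, w l + n ≠ 0 := by
    intro l n h
    apply hz (-l) (-n)
    simp only [hw] at h
    push_cast
    linear_combination h
  set S : ℤ → ℂ := fun l => ∑' n : ℤ, ee (n * w l) * (Ik a (n - cc m s) : ℂ) with hS
  set R : ℤ → ℂ := fun l => Rc2 (cc m s) (ee (w l)) with hR
  have hP := Pt_summable m hm s τ hτ z
  have hrow : ∀ l : ℤ, HasSum (fun n : ℤ => Pt m s τ z (l, n)) (A l * ((2 * Real.pi * I) ^ 2 * R l - S l)) := by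
    intro l
    have := (row_hasSum a (cc m s) (w l) ha0 (hw0 l)).mul_left (A l)
    simp_rw [Pt_eq]
    exact this
  have hrows := hP.hasSum.prod_fiberwise hrow
  -- the theta part
  have hpair := pair_sum m hm s τ hτ z
  have hAS : ∀ l : ℤ, A l * S l = ∑' n : ℤ, Hn m s τ n * Tm m τ z (n + 2 * m * l) := by
    intro l
    simp only [hS, ← tsum_mul_left]
    apply tsum_congr; intro n
    exact term_eq m hm s τ z l n
  have hASs : Summable fun l => A l * S l := by
    simp_rw [hAS]; exact hpair.prod
  have hASt : ∑' l, A l * S l = 4 * Real.pi ^ 2 * m * ∑ l ∈ Finset.range (2 * m), thSstar m s (l : ℤ) τ * jTheta m (l : ℤ) τ z := by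
    simp_rw [hAS]
    have hsw := hpair.prod_symm
    rw [← hpair.tsum_prod, ← Equiv.tsum_eq (Equiv.prodComm ℤ ℤ)]
    have hth : ∀ n : ℤ, ∑' l : ℤ, Hn m s τ n * Tm m τ z (n + 2 * m * l) = Hn m s τ n * jTheta m n τ z := by
      intro n; rw [tsum_mul_left, jTheta_eq]
    have h1 : ∑' p : ℤ × ℤ, Hn m s τ ((Equiv.prodComm ℤ ℤ) p).2 * Tm m τ z (((Equiv.prodComm ℤ ℤ) p).2 + 2 * m * ((Equiv.prodComm ℤ ℤ) p).1)
        = ∑' n : ℤ, Hn m s τ n * jTheta m n τ z := by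
      have := hsw.tsum_prod
      simp_rw [← hth]
      exact this
    have h2 : Summable fun n : ℤ => Hn m s τ n * jTheta m n τ z := by
      simp_rw [← hth]; exact hsw.prod
    rw [h1, sum_mod (2 * m) (by omega) _ h2, Finset.mul_sum]
    apply Finset.sum_congr rfl; intro l _
    push_cast
    simp_rw [jTheta_period, tsum_mul_right]
    rw [star_eq m hm s τ hτ l]
    ring
  have hAR : AppellB m s τ z = ∑' l, A l * R l := by
    unfold AppellB Av
    rw [← tsum_mul_left]
    apply tsum_congr; intro l
    have : ee ((l:ℂ) * τ + z) / ee (zpt s τ) = ee (w l) := by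
      rw [div_eq_mul_inv, ← ee_neg, ← ee_add]; congr 1; simp only [hw]; ring
    beta_reduce
    rw [this]
    simp only [hA, hR, cc]
    ring
  have h4 : ((2 * Real.pi * I : ℂ) ^ 2) = -(4 * Real.pi ^ 2) := by
    linear_combination (4 * (Real.pi:ℂ) ^ 2) * I_sq
  have hfin := (hrows.add hASs.hasSum).mul_left (-(1 / (4 * (Real.pi:ℂ)^2)))
  have e : (fun l => -(1 / (4 * (Real.pi:ℂ)^2)) * (A l * ((2 * Real.pi * I) ^ 2 * R l - S l) + A l * S l)) = fun l => A l * R l := by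
    funext l; rw [h4]; field_simp; ring
  rw [e] at hfin
  rw [BhatB, hAR, hfin.tsum_eq, hASt]
  field_simp
  ring

/-- Theorem: the completed second Appell–Lerch sum `B̂^s_m` transforms like a Jacobi form of
weight 2 and index `m`: it has the stated behaviour under translation of `s` by `ℤ²`, under
elliptic transformations of `z`, and under `SL(2,ℤ)`. -/
theorem completed_second_appell_lerch_transformations (m : ℕ) (hm : 0 < m) (s : ℚ × ℚ) :
    (∀ lam mu : ℤ, ∀ τ : ℂ, 0 < τ.im → ∀ z : ℂ,
      (∀ a b : ℤ, z ≠ zpt s τ + (a : ℂ) * τ + (b : ℂ)) →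
      BhatB m (s.1 + (lam : ℚ), s.2 + (mu : ℚ)) τ z =
        ee (-(m : ℂ) * ((mu : ℂ) * (s.1 : ℚ) - (lam : ℂ) * (s.2 : ℚ) + (lam : ℂ) * (mu : ℂ))) *
          BhatB m s τ z) ∧
    (∀ lam mu : ℤ, ∀ τ : ℂ, 0 < τ.im → ∀ z : ℂ,
      (∀ a b : ℤ, z ≠ zpt s τ + (a : ℂ) * τ + (b : ℂ)) →
      BhatB m s τ (z + (lam : ℂ) * τ + (mu : ℂ)) =
        ee (-(m : ℂ) * ((lam : ℂ) ^ 2 * τ + 2 * (lam : ℂ) * z)) * BhatB m s τ z) ∧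
    (∀ a b c d : ℤ, a * d - b * c = 1 → ∀ τ : ℂ, 0 < τ.im → ∀ z : ℂ,
      (∀ i j : ℤ,
        z ≠ zpt (s.1 * (a : ℚ) + s.2 * (c : ℚ), s.1 * (b : ℚ) + s.2 * (d : ℚ)) τ +
          (i : ℂ) * τ + (j : ℂ)) →
      BhatB m s (((a : ℂ) * τ + (b : ℂ)) / ((c : ℂ) * τ + (d : ℂ)))
          (z / ((c : ℂ) * τ + (d : ℂ))) =
        ((c : ℂ) * τ + (d : ℂ)) ^ 2 *
          ee ((m : ℂ) * (c : ℂ) * z ^ 2 / ((c : ℂ) * τ + (d : ℂ))) *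
          BhatB m (s.1 * (a : ℚ) + s.2 * (c : ℚ), s.1 * (b : ℚ) + s.2 * (d : ℚ)) τ z) := by
  exact main_of_P Bhat_eq m hm s
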